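/- For r > 2 + √2, the stability function ψ(z) = (1 + (2/r) z + (1/r²) z²) / (1 − ((r−2)/r) z + ((r²−4r+2)/(2r²)) z²) satisfies ψ(z) = e^z + O(z³) as z → 0; precisely, ψ(z) = 1 + z + z²/2 + O(z³). -/

import Mathlib

open Filter Asymptotics

/-!
If `D` does not vanish at `a`, then `1 / D` is bounded near `a`, so `N / D` agrees with `P` up to
`O((z - a) ^ n)` as soon as `(X - a) ^ n` divides `N - P * D`. For the stability function, `a = 0`
and `P = 1 + X + X ^ 2 / 2`, the coefficients of `N - P * D` in degrees `0`, `1` and `2` cancel.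
-/

theorem isBigO_div_sub_of_isBigO_sub_mul {α 𝕜 E : Type*} [NormedField 𝕜] [SeminormedAddCommGroup E]
    {l : Filter α} {f g p : α → 𝕜} {u : α → E} {c : 𝕜} (hg : Tendsto g l (nhds c)) (hc : c ≠ 0)
    (h : (fun x => f x - p x * g x) =O[l] u) :
    (fun x => f x / g x - p x) =O[l] u := by
  have inv_bounded : (fun x => (g x)⁻¹) =O[l] (fun _ => (1 : ℝ)) := (hg.inv₀ hc).isBigO_one ℝ
  have quotient_bound : (fun x => (g x)⁻¹ * (f x - p x * g x)) =O[l] u := by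
    simpa only [one_mul, isBigO_norm_right] using inv_bounded.mul h.norm_right
  refine quotient_bound.congr' ?_ .rfl
  filter_upwards [hg.eventually_ne hc] with x hx
  field_simp

section Polynomial

open Polynomial

theorem isBigO_eval_div_eval_sub_eval_of_X_sub_C_pow_dvd {𝕜 : Type*} [NormedField 𝕜] {N D P : 𝕜[X]}
    {a : 𝕜} {n : ℕ} (hD : D.eval a ≠ 0) (h : (X - C a) ^ n ∣ N - P * D) :
    (fun z => N.eval z / D.eval z - P.eval z) =O[nhds a] (fun z => (z - a) ^ n) := by
  obtain ⟨W, hW⟩ := h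
  have residual_eq (z : 𝕜) : N.eval z - P.eval z * D.eval z = (z - a) ^ n * W.eval z := by
    simpa using congrArg (eval z) hW
  refine isBigO_div_sub_of_isBigO_sub_mul D.continuousAt hD ?_
  simpa only [residual_eq, mul_one] using
    (isBigO_refl (fun z : 𝕜 => (z - a) ^ n) (nhds a)).mul (W.continuousAt.tendsto.isBigO_one 𝕜)

theorem X_pow_three_dvd_dwrk_residual {𝕜 : Type*} [Field 𝕜] [CharZero 𝕜] {r : 𝕜} (hr : r ≠ 0) :
    (X ^ 3 : 𝕜[X]) ∣ (1 + C (2 / r) * X + C (1 / r ^ 2) * X ^ 2) -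
      (1 + X + C (1 / 2) * X ^ 2) *
        (1 - C ((r - 2) / r) * X + C ((r ^ 2 - 4 * r + 2) / (2 * r ^ 2)) * X ^ 2) := by
  refine ⟨C ((r - 1) / r ^ 2) - C ((r ^ 2 - 4 * r + 2) / (4 * r ^ 2)) * X,
    Polynomial.funext fun z => ?_⟩
  simp only [eval_add, eval_sub, eval_mul, eval_pow, eval_one, eval_C, eval_X]
  field_simp
  ring

theorem dwrk_second_order_general {𝕜 : Type*} [NormedField 𝕜] [CharZero 𝕜] {r : 𝕜} (hr : r ≠ 0) :
    (fun z : 𝕜 =>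
        (1 + 2 / r * z + 1 / r ^ 2 * z ^ 2) /
            (1 - (r - 2) / r * z + (r ^ 2 - 4 * r + 2) / (2 * r ^ 2) * z ^ 2)
          - (1 + z + z ^ 2 / 2)) =O[nhds 0] (fun z : 𝕜 => z ^ 3) := by
  have residual_dvd := X_pow_three_dvd_dwrk_residual hr
  rw [show (X ^ 3 : 𝕜[X]) = (X - C 0) ^ 3 by rw [C_0, sub_zero]] at residual_dvd
  simpa [div_eq_inv_mul] using
    isBigO_eval_div_eval_sub_eval_of_X_sub_C_pow_dvd (by simp) residual_dvd

end Polynomial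

theorem dwrk_second_order (r : ℝ) (hr : 2 + Real.sqrt 2 < r) :
    (fun z : ℂ =>
        (1 + ((2 / r : ℝ)) * z + ((1 / r ^ 2 : ℝ)) * z ^ 2) /
            (1 - ((r - 2) / r : ℝ) * z + (((r ^ 2 - 4 * r + 2) / (2 * r ^ 2) : ℝ)) * z ^ 2)
          - (1 + z + z ^ 2 / 2)) =O[nhds 0] (fun z : ℂ => z ^ 3) := by
  have hr_pos : 0 < r := by linarith [Real.sqrt_nonneg 2]
  exact_mod_cast dwrk_second_order_general (Complex.ofReal_ne_zero.mpr hr_pos.ne')
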